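/- For every k ≥ 1, every x ∈ S^k with x_0 < 1, and every v ∈ ℝ^{k+1} with ⟨v, x⟩ = 0, the vectors b_1(x), ..., b_k(x) form a basis of the tangent space at x in the sense that v = Σ_{i=1}^k ⟨v, b_i(x)⟩ b_i(x); in particular ‖v‖₂² = Σ_{i=1}^k ⟨v, b_i(x)⟩². -/

import Mathlib

open Finset

noncomputable section

/-- The ℓ₂-norm on `ℝⁿ`. -/
def l2 {n : ℕ} (x : Fin n → ℝ) : ℝ := Real.sqrt (∑ i, x i ^ 2)

/-- The standard inner product on `ℝⁿ`. -/
def dotp {n : ℕ} (x y : Fin n → ℝ) : ℝ := ∑ i, x i * y i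

/-- The unit sphere `S^k` in `ℝ^{k+1}`. -/
def unitSphere (k : ℕ) : Set (Fin (k + 1) → ℝ) := {x | l2 x = 1}

/-- The tangent vector `b_i(x)`: `[b_i(x)]₀ = x_i`,
`[b_i(x)]_i = 1 − x_i² / (1 − x₀)`, and `[b_i(x)]_j = −x_j x_i / (1 − x₀)` otherwise. -/
def tb {k : ℕ} (x : Fin (k + 1) → ℝ) (i : Fin k) : Fin (k + 1) → ℝ := fun j =>
  if j = 0 then x i.succ
  else if j = i.succ then 1 - (x i.succ) ^ 2 / (1 - x 0)
  else -(x j) * x i.succ / (1 - x 0)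

theorem tb_zero {k : ℕ} (x : Fin (k + 1) → ℝ) (i : Fin k) : tb x i 0 = x i.succ := by
  simp [tb]

theorem tb_succ {k : ℕ} (x : Fin (k + 1) → ℝ) (i j : Fin k) :
    tb x i j.succ = (if j = i then 1 else 0) - x j.succ * x i.succ / (1 - x 0) := by
  by_cases h : j = i
  · subst h
    simp [tb, sq]
  · simp [tb, h, neg_div]

/-- On the tangent space at `x`, the coefficient along `b_i(x)` is `v_i + v₀ x_i / (1 − x₀)`. -/
theorem dotp_tb {k : ℕ} {x v : Fin (k + 1) → ℝ} (hx0 : x 0 < 1) (hv : dotp v x = 0)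
    (i : Fin k) : dotp v (tb x i) = v i.succ + v 0 / (1 - x 0) * x i.succ := by
  have hs : 1 - x 0 ≠ 0 := by linarith
  have hP : ∑ j : Fin k, v j.succ * x j.succ = -(v 0 * x 0) := by
    rw [dotp, Fin.sum_univ_succ] at hv
    linarith
  have hsum : ∑ j : Fin k, v j.succ * (x j.succ * x i.succ / (1 - x 0))
      = -(v 0 * x 0) * (x i.succ / (1 - x 0)) := by
    rw [← hP, Finset.sum_mul]
    exact Finset.sum_congr rfl fun j _ => by ring
  rw [dotp, Fin.sum_univ_succ]
  simp only [tb_zero, tb_succ, mul_sub, Finset.sum_sub_distrib, hsum, mul_ite, mul_one, mul_zero,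
    Finset.sum_ite_eq', Finset.mem_univ, if_true]
  field_simp
  ring

/-- For `x ∈ S^k` with `x₀ < 1`, the vectors `b_1(x), …, b_k(x)` form a basis of the
tangent space at `x`: every tangent vector `v` satisfies `v = Σᵢ ⟨v, bᵢ(x)⟩ bᵢ(x)`,
and in particular `‖v‖₂² = Σᵢ ⟨v, bᵢ(x)⟩²`. -/
theorem tangent_basis_span (k : ℕ) (hk : 1 ≤ k)
    (x : Fin (k + 1) → ℝ) (hx : x ∈ unitSphere k) (hx0 : x 0 < 1)
    (v : Fin (k + 1) → ℝ) (hv : dotp v x = 0) :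
    v = ∑ i : Fin k, dotp v (tb x i) • tb x i ∧
    (∑ j, v j ^ 2) = ∑ i : Fin k, dotp v (tb x i) ^ 2 := by
  have hs : 1 - x 0 ≠ 0 := by linarith
  have hP : ∑ j : Fin k, v j.succ * x j.succ = -(v 0 * x 0) := by
    have h := hv
    rw [dotp, Fin.sum_univ_succ] at h
    linarith
  have hQ : ∑ j : Fin k, x j.succ ^ 2 = (1 - x 0) * (1 + x 0) := by
    have h : Real.sqrt (∑ i, x i ^ 2) = 1 := hx
    rw [Real.sqrt_eq_one, Fin.sum_univ_succ] at h
    linarith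
  simp only [dotp_tb hx0 hv]
  set c := v 0 / (1 - x 0) with hc
  have hv0 : v 0 = c * (1 - x 0) := by rw [hc]; field_simp
  have hzero : ∑ i : Fin k, (v i.succ + c * x i.succ) * x i.succ = v 0 := by
    calc ∑ i : Fin k, (v i.succ + c * x i.succ) * x i.succ
        = ∑ i : Fin k, v i.succ * x i.succ + c * ∑ i : Fin k, x i.succ ^ 2 := by
          rw [Finset.mul_sum, ← Finset.sum_add_distrib]
          exact Finset.sum_congr rfl fun i _ => by ring
      _ = v 0 := by rw [hP, hQ, hv0]; ring
  constructor
  · funext j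
    simp only [Finset.sum_apply, Pi.smul_apply, smul_eq_mul]
    refine Fin.cases ?_ (fun j => ?_) j
    · simp only [tb_zero, hzero]
    · have hsum : ∑ i : Fin k, (v i.succ + c * x i.succ) * (x j.succ * x i.succ / (1 - x 0))
          = v 0 * (x j.succ / (1 - x 0)) := by
        rw [← hzero, Finset.sum_mul]
        exact Finset.sum_congr rfl fun i _ => by ring
      simp only [tb_succ, mul_sub, Finset.sum_sub_distrib, hsum, mul_ite, mul_one, mul_zero,
        Finset.sum_ite_eq, Finset.mem_univ, if_true]
      rw [hc]
      ring
  · calc ∑ j, v j ^ 2 = v 0 ^ 2 + ∑ i : Fin k, v i.succ ^ 2 := Fin.sum_univ_succ _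
      _ = ∑ i : Fin k, v i.succ ^ 2 + c * ∑ i : Fin k, v i.succ * x i.succ
          + c * ∑ i : Fin k, (v i.succ + c * x i.succ) * x i.succ := by
          rw [hzero, hP, hv0]; ring
      _ = ∑ i : Fin k, (v i.succ + c * x i.succ) ^ 2 := by
          rw [Finset.mul_sum, Finset.mul_sum, ← Finset.sum_add_distrib, ← Finset.sum_add_distrib]
          exact Finset.sum_congr rfl fun i _ => by ring

end
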